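/- arXiv:1208.1695 — 2 statements merged into one kernel-verified Lean document; each statement's English description precedes it below -/
import Mathlib

section
/- Let X ⊂ k^n be a finite set of N distinct points and let u_1 < u_2 < … < u_N be the elements of the Gröbner escalier N(I(X)) listed in increasing order with respect to the lexicographical order induced by x_1 < … < x_n. If v_1 < v_2 < … < v_N are any N monomials whose residue classes form a k-vector-space basis of k[x_1,…,x_n]/I(X), then u_j ≤ v_j for every j = 1,…,N; that is, the monomial basis of the quotient given by the Gröbner escalier is minimal with respect to the term order. -/
/-!  STATEMENT 3.
The monomial basis of `k[x_1,…,x_n]/I(X)` given by the Gröbner escalier is minimal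
with respect to the lexicographical term order: if `u_1 < … < u_N` enumerates the
escalier and `v_1 < … < v_N` are monomials whose residue classes form a basis of the
quotient, then `u_j ≤ v_j` for every `j`. -/

open MvPolynomial

/-- Lexicographical order induced by `x_1 < … < x_n` on exponent vectors. -/
def lexLt {n : ℕ} (a b : Fin n →₀ ℕ) : Prop :=
  ∃ j : Fin n, a j < b j ∧ ∀ i : Fin n, j < i → a i = b i

/-- `m` is the lex-leading monomial (exponent vector) of `f`. -/
def IsLeadMon {n : ℕ} {k : Type*} [Field k]
    (f : MvPolynomial (Fin n) k) (m : Fin n →₀ ℕ) : Prop :=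
  m ∈ f.support ∧ ∀ e ∈ f.support, e ≠ m → lexLt e m

/-- `T(I)`: the set of lex-leading monomials of nonzero elements of `I`. -/
def LTset {n : ℕ} {k : Type*} [Field k]
    (I : Ideal (MvPolynomial (Fin n) k)) : Set (Fin n →₀ ℕ) :=
  {m | ∃ f ∈ I, f ≠ 0 ∧ IsLeadMon f m}

/-- The Gröbner escalier `N(I) = T \ T(I)`. -/
def Escalier {n : ℕ} {k : Type*} [Field k]
    (I : Ideal (MvPolynomial (Fin n) k)) : Set (Fin n →₀ ℕ) :=
  (LTset I)ᶜ

theorem lexLt_wf {n : ℕ} : WellFounded (lexLt (n := n)) := by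
  have h := Finsupp.Lex.wellFounded_of_finite (α := Fin n) (N := ℕ) (r := (· > ·))
    (s := (· < ·)) wellFounded_lt
  refine Subrelation.wf ?_ h
  rintro a b ⟨j, h1, h2⟩
  exact ⟨j, fun i hi => h2 i hi, h1⟩

theorem lexLt_trans {n : ℕ} {a b c : Fin n →₀ ℕ} (h1 : lexLt a b) (h2 : lexLt b c) :
    lexLt a c := by
  obtain ⟨i, hi, hi'⟩ := h1
  obtain ⟨j, hj, hj'⟩ := h2
  rcases lt_trichotomy i j with h | h | h
  · exact ⟨j, by rw [hi' j h]; exact hj, fun l hl => by rw [hi' l (h.trans hl), hj' l hl]⟩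
  · subst h
    exact ⟨i, hi.trans hj, fun l hl => by rw [hi' l hl, hj' l hl]⟩
  · exact ⟨i, by rw [← hj' i h]; exact hi, fun l hl => by rw [hi' l hl, hj' l (h.trans hl)]⟩

theorem lexLt_irrefl {n : ℕ} {a : Fin n →₀ ℕ} (h : lexLt a a) : False := by
  obtain ⟨i, hi, _⟩ := h
  exact lt_irrefl _ hi

theorem lexLt_tri {n : ℕ} (a b : Fin n →₀ ℕ) : lexLt a b ∨ a = b ∨ lexLt b a := by
  by_cases hab : a = b
  · exact Or.inr (Or.inl hab)
  have hne : (Finset.univ.filter (fun i => a i ≠ b i)).Nonempty := by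
    by_contra hcon
    rw [Finset.not_nonempty_iff_eq_empty] at hcon
    refine hab (Finsupp.ext fun i => ?_)
    by_contra hi
    have : i ∈ Finset.univ.filter (fun i => a i ≠ b i) := by simp [hi]
    rw [hcon] at this
    simp at this
  obtain ⟨j, hj, hmax⟩ := Finset.exists_max_image _ id hne
  have heq : ∀ i, j < i → a i = b i := by
    intro i hi
    by_contra hc
    exact absurd (hmax i (by simp [hc])) (not_le.mpr hi)
  have hj' : a j ≠ b j := by simpa using hj
  rcases lt_or_gt_of_ne hj' with h | h
  · exact Or.inl ⟨j, h, heq⟩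
  · exact Or.inr (Or.inr ⟨j, h, fun i hi => (heq i hi).symm⟩)

/-- Every monomial is, modulo `I`, a combination of escalier monomials not above it. -/
theorem mk_monomial_mem_span {n : ℕ} {k : Type*} [Field k]
    (I : Ideal (MvPolynomial (Fin n) k)) (m : Fin n →₀ ℕ) :
    Ideal.Quotient.mk I (monomial m (1 : k)) ∈ Submodule.span k
      ((fun e => Ideal.Quotient.mk I (monomial e (1 : k))) ''
        {e | e ∈ Escalier I ∧ (e = m ∨ lexLt e m)}) := by
  induction m using lexLt_wf.induction with
  | _ m ih =>
  by_cases hm : m ∈ Escalier I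
  · exact Submodule.subset_span ⟨m, ⟨hm, Or.inl rfl⟩, rfl⟩
  have hm' : m ∈ LTset I := not_not.mp hm
  obtain ⟨f, hfI, -, hmf, hlead⟩ := hm'
  set S := Submodule.span k
      ((fun e => Ideal.Quotient.mk I (monomial e (1 : k))) ''
        {e | e ∈ Escalier I ∧ (e = m ∨ lexLt e m)}) with hS
  have hlow : ∀ e ∈ f.support.erase m,
      Ideal.Quotient.mk I (monomial e (f.coeff e)) ∈ S := by
    intro e he
    rw [Finset.mem_erase] at he
    have hlt := hlead e he.2 he.1
    have h1 := ih e hlt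
    have h2 : Ideal.Quotient.mk I (monomial e (1 : k)) ∈ S := by
      refine Submodule.span_mono (Set.image_mono ?_) h1
      rintro d ⟨hd, hd'⟩
      refine ⟨hd, Or.inr ?_⟩
      rcases hd' with rfl | hd'
      · exact hlt
      · exact lexLt_trans hd' hlt
    have h3 : Ideal.Quotient.mk I (monomial e (f.coeff e)) =
        f.coeff e • Ideal.Quotient.mk I (monomial e (1 : k)) := by
      rw [← Ideal.Quotient.mkₐ_eq_mk k, ← map_smul, smul_monomial, smul_eq_mul, mul_one]
    rw [h3]
    exact S.smul_mem _ h2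
  have hsum : Ideal.Quotient.mk I f = 0 := Ideal.Quotient.eq_zero_iff_mem.mpr hfI
  rw [f.as_sum, map_sum, ← Finset.add_sum_erase _ _ hmf] at hsum
  have h4 : Ideal.Quotient.mk I (monomial m (f.coeff m)) ∈ S := by
    rw [eq_neg_of_add_eq_zero_left hsum]
    exact S.neg_mem (S.sum_mem hlow)
  have hc : f.coeff m ≠ 0 := mem_support_iff.mp hmf
  have h5 : Ideal.Quotient.mk I (monomial m (1 : k)) =
      (f.coeff m)⁻¹ • Ideal.Quotient.mk I (monomial m (f.coeff m)) := by
    rw [← Ideal.Quotient.mkₐ_eq_mk k, ← map_smul, smul_monomial, smul_eq_mul,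
      inv_mul_cancel₀ hc]
  rw [h5]
  exact S.smul_mem _ h4

theorem escalier_monomial_basis_minimal {n : ℕ} {k : Type*} [Field k]
    (X : Finset (Fin n → k))
    (I : Ideal (MvPolynomial (Fin n) k))
    (hI : ∀ f, f ∈ I ↔ ∀ p ∈ X, MvPolynomial.eval p f = 0)
    (N : ℕ) (hN : N = X.card)
    (u v : Fin N → (Fin n →₀ ℕ))
    (hu_range : Set.range u = Escalier I)
    (hu_mono : ∀ i j : Fin N, i < j → lexLt (u i) (u j))
    (hv_mono : ∀ i j : Fin N, i < j → lexLt (v i) (v j))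
    (hv_li : LinearIndependent k
      (fun j : Fin N => Ideal.Quotient.mk I (monomial (v j) (1 : k))))
    (hv_span : Submodule.span k (Set.range
      (fun j : Fin N => Ideal.Quotient.mk I (monomial (v j) (1 : k)))) = ⊤) :
    ∀ j : Fin N, u j = v j ∨ lexLt (u j) (v j) := by
  intro j
  rcases lexLt_tri (u j) (v j) with h | h | h
  · exact Or.inr h
  · exact Or.inl h
  exfalso
  set g : (Fin n →₀ ℕ) → MvPolynomial (Fin n) k ⧸ I :=
    fun e => Ideal.Quotient.mk I (monomial e (1 : k)) with hg
  let s : Finset (MvPolynomial (Fin n) k ⧸ I) := by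
    classical exact (Finset.Iio j).image (fun i => g (u i))
  have hs : s.card ≤ j := by
    classical
    refine (Finset.card_image_le).trans ?_
    simp
  have hmem : ∀ i : Finset.Iic j, g (v i) ∈ Submodule.span k (s : Set _) := by
    rintro ⟨i, hi⟩
    rw [Finset.mem_Iic] at hi
    have hvi : lexLt (v i) (u j) := by
      rcases hi.eq_or_lt with rfl | hi
      · exact h
      · exact lexLt_trans (hv_mono _ _ hi) h
    refine Submodule.span_mono ?_ (mk_monomial_mem_span I (v i))
    rintro _ ⟨e, ⟨he, he'⟩, rfl⟩
    rw [← hu_range] at he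
    obtain ⟨l, rfl⟩ := he
    have hlj : lexLt (u l) (u j) := by
      rcases he' with he' | he'
      · rw [he']; exact hvi
      · exact lexLt_trans he' hvi
    have hl : l < j := by
      by_contra hc
      rcases (not_lt.mp hc).eq_or_lt with rfl | hc
      · exact lexLt_irrefl hlj
      · exact lexLt_irrefl (lexLt_trans hlj (hu_mono _ _ hc))
    simp only [s, Finset.coe_image]
    exact ⟨l, by simpa using hl, rfl⟩
  have hli : LinearIndependent k (fun i : Finset.Iic j => g (v i)) :=
    hv_li.comp (fun i : Finset.Iic j => (i : Fin N)) Subtype.val_injective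
  have hli' : LinearIndependent k (fun i : Finset.Iic j =>
      (⟨g (v i), hmem i⟩ : Submodule.span k (s : Set (MvPolynomial (Fin n) k ⧸ I)))) :=
    LinearIndependent.of_comp (Submodule.subtype _) hli
  have h1 := hli'.fintype_card_le_finrank
  have h2 := finrank_span_finset_le_card (R := k) s
  have h3 : Fintype.card (Finset.Iic j) = j + 1 := by
    rw [Fintype.card_coe, Fin.card_Iic]
  unfold Set.finrank at h2
  omega
end

section
/- (Elimination Theorem.) Let I be an ideal of k[x_1,…,x_n], fix the lexicographical order induced by x_1 < … < x_n, and for 1 ≤ j ≤ n let I_j = I ∩ k[x_1,…,x_j] be the j-th elimination ideal. If G is a Gröbner basis of I with respect to this order, then G_j := G ∩ k[x_1,…,x_j] is a Gröbner basis of I_j with respect to the lexicographical order induced by x_1 < … < x_j on k[x_1,…,x_j]. -/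
/-!  STATEMENT 11.  (Elimination Theorem.)
If `G` is a Gröbner basis of `I ⊆ k[x_1,…,x_n]` for the lex order induced by
`x_1 < … < x_n`, then for `1 ≤ j ≤ n` the set `G_j = G ∩ k[x_1,…,x_j]` is a Gröbner
basis of the elimination ideal `I_j = I ∩ k[x_1,…,x_j]` for the lex order on
`k[x_1,…,x_j]`. -/

open MvPolynomial

/-- `f ∈ k[x_1,…,x_j]`: `f` only involves the first `j` variables. -/
def inFirstVars {n : ℕ} {k : Type*} [Field k] (j : ℕ)
    (f : MvPolynomial (Fin n) k) : Prop :=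
  ∀ m ∈ f.support, ∀ i : Fin n, m i ≠ 0 → (i : ℕ) < j

theorem elimination_theorem {n : ℕ} {k : Type*} [Field k]
    (I : Ideal (MvPolynomial (Fin n) k))
    (G : Set (MvPolynomial (Fin n) k))
    (hGI : G ⊆ (I : Set (MvPolynomial (Fin n) k)))
    -- `G` is a Gröbner basis of `I`: the leading monomials of `G` generate `T(I)`
    (hGB : ∀ m : Fin n →₀ ℕ,
      (∃ f ∈ I, f ≠ 0 ∧ IsLeadMon f m) ↔
      (∃ g ∈ G, g ≠ 0 ∧ ∃ e : Fin n →₀ ℕ, IsLeadMon g e ∧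
        ∃ u : Fin n →₀ ℕ, m = e + u))
    (j : ℕ) (hj1 : 1 ≤ j) (hjn : j ≤ n) :
    -- `G_j ⊆ I_j` …
    ({g ∈ G | inFirstVars j g} ⊆ {f | f ∈ I ∧ inFirstVars j f}) ∧
    -- … and the leading monomials of `G_j` generate `T(I_j)` within `T[j]`
    (∀ m : Fin n →₀ ℕ,
      (∃ f, (f ∈ I ∧ inFirstVars j f) ∧ f ≠ 0 ∧ IsLeadMon f m) ↔
      (∃ g ∈ G, inFirstVars j g ∧ g ≠ 0 ∧ ∃ e : Fin n →₀ ℕ, IsLeadMon g e ∧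
        ∃ u : Fin n →₀ ℕ, (∀ i : Fin n, u i ≠ 0 → (i : ℕ) < j) ∧ m = e + u)) := by
  refine ⟨fun g hg => ⟨hGI hg.1, hg.2⟩, fun m => ⟨?_, ?_⟩⟩
  · rintro ⟨f, ⟨hfI, hfj⟩, hf0, hfm⟩
    obtain ⟨g, hgG, hg0, e, he, u, rfl⟩ := (hGB m).1 ⟨f, hfI, hf0, hfm⟩
    have hm : ∀ i : Fin n, (e + u) i ≠ 0 → (i : ℕ) < j := hfj _ hfm.1
    have hej : ∀ i : Fin n, e i ≠ 0 → (i : ℕ) < j := fun i hi => hm i (by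
      rw [Finsupp.add_apply]; omega)
    have huj : ∀ i : Fin n, u i ≠ 0 → (i : ℕ) < j := fun i hi => hm i (by
      rw [Finsupp.add_apply]; omega)
    refine ⟨g, hgG, ?_, hg0, e, he, u, huj, rfl⟩
    intro d hd i hi
    by_cases hde : d = e
    · subst hde
      exact hej i hi
    · obtain ⟨l, hl, hl'⟩ := he.2 d hd hde
      have hlj : (l : ℕ) < j := hej l (by omega)
      by_cases hli : l < i
      · exact hej i (by rw [← hl' i hli]; exact hi)
      · have : (i : ℕ) ≤ (l : ℕ) := not_lt.1 hli
        omega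
  · rintro ⟨g, hgG, hgj, hg0, e, he, u, huj, rfl⟩
    have hsupp : ∀ d ∈ (monomial u (1 : k) * g).support, ∃ c ∈ g.support, d = u + c := by
      intro d hd
      rw [mem_support_iff, coeff_monomial_mul'] at hd
      split_ifs at hd with h
      · refine ⟨d - u, ?_, (add_tsub_cancel_of_le h).symm⟩
        rw [mem_support_iff]
        simpa using hd
      · exact absurd rfl hd
    have hlead : e + u ∈ (monomial u (1 : k) * g).support := by
      rw [add_comm, mem_support_iff, coeff_monomial_mul, one_mul]
      exact mem_support_iff.1 he.1
    refine ⟨monomial u 1 * g, ⟨I.mul_mem_left _ (hGI hgG), ?_⟩, ?_, hlead, ?_⟩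
    · intro d hd i hi
      obtain ⟨c, hc, rfl⟩ := hsupp d hd
      rw [Finsupp.add_apply] at hi
      by_cases hu : u i = 0
      · exact hgj c hc i (by omega)
      · exact huj i hu
    · intro h0
      rw [h0] at hlead
      simp at hlead
    · intro d hd hne
      obtain ⟨c, hc, rfl⟩ := hsupp d hd
      obtain ⟨l, hl, hl'⟩ := he.2 c hc (by rintro rfl; exact hne (add_comm _ _))
      refine ⟨l, ?_, fun i hi => ?_⟩
      · simp only [Finsupp.add_apply]; omega
      · simp only [Finsupp.add_apply, hl' i hi]; omega
end
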